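/- (Left uniform interpolants define the universal bisimulation quantifier.) Let p be a propositional variable, q̄ a finite set of variables not containing p, φ a formula with variables among {p} ∪ q̄, and α a formula with variables among q̄. If α ⊨ φ and for every formula ψ not containing p, ψ ⊨ φ implies ψ ⊨ α, then ⟦α⟧_{p,q̄} = A_p(⟦φ⟧_{p,q̄}). -/

import Mathlib

/-!
Forcing of `qbar`-formulas is invariant under `qbar`-bisimulation, which gives `semC α ⊆ Ap _ _`.

For the converse let every model `qbar`-bisimilar to the finite pointed model `(X, w)` force `φ`.
It suffices to find a `qbar`-formula `ψ` forced at `w` with `Entails ψ φ`, for then `h2` makes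
`w` force `α`. The formula `ψ` is a characteristic formula (`exists_char`): it is forced at `w`,
and any point `v` of any model forcing it is `qbar`-bisimilar to some point above `w`. Given such
a `v` in a finite model `N`, gluing `N` on top of `X` along the bisimulation (`glue`) yields a
model whose root is bisimilar to `(X, w)` and which contains `N` as an upward closed submodel with
`v` above the root; so `v` forces `φ` by persistence.

The characteristic formula is built from a finite set `F` of `qbar`-formulas that contains the
variables in `qbar` and decides inclusion of `qbar`-theories between points of `X`. With
`A T = ⋀ T` and `B T = ⋁ (F \ T)`, a point has `F`-type exactly `T` iff it forces `A T` but not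
`B T`. The formula `ψ` is the conjunction of
* `A T → B T` for each `T ⊆ F` that is not the type of a point of `X`;
* `(A u' → B u') → B u` for `u ≼ u'` in `X`, with `A u`, `B u` those of the type of `u`;
* `A w`.
The first family makes every point above `v` have the type of a point of `X`, and the second
yields the back condition for "having the same `F`-type". The forth condition is a fact about `X`
alone: if the theory of `u` is included in that of `x`, then some point above `u` has the same
theory as `x` (otherwise `u` would force `A x → B x`, which `x` does not).
-/

/-- Intuitionistic propositional formulas over variables indexed by `ℕ`. -/
inductive IPForm : Type
  | var : ℕ → IPForm
  | bot : IPForm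
  | conj : IPForm → IPForm → IPForm
  | disj : IPForm → IPForm → IPForm
  | impl : IPForm → IPForm → IPForm

/-- The set of propositional variables occurring in a formula. -/
def IPForm.vars : IPForm → Finset ℕ
  | .var p => {p}
  | .bot => ∅
  | .conj a b => a.vars ∪ b.vars
  | .disj a b => a.vars ∪ b.vars
  | .impl a b => a.vars ∪ b.vars

/-- The implication-nesting depth of a formula. -/
def IPForm.depth : IPForm → ℕ
  | .var _ => 0
  | .bot => 0
  | .conj a b => max a.depth b.depth
  | .disj a b => max a.depth b.depth
  | .impl a b => max a.depth b.depth + 1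

/-- An intuitionistic Kripke model: a preorder together with a persistent
valuation of the propositional variables. -/
structure KModel where
  W : Type
  rel : W → W → Prop
  refl : ∀ w, rel w w
  trans : ∀ {u v w}, rel u v → rel v w → rel u w
  val : ℕ → W → Prop
  mono : ∀ {p u v}, rel u v → val p u → val p v

/-- The intuitionistic forcing relation. -/
def KModel.Forces (M : KModel) : M.W → IPForm → Prop
  | w, .var p => M.val p w
  | _, .bot => False
  | w, .conj a b => M.Forces w a ∧ M.Forces w b
  | w, .disj a b => M.Forces w a ∨ M.Forces w b
  | w, .impl a b => ∀ v, M.rel w v → M.Forces v a → M.Forces v b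

/-- Semantic entailment over finite Kripke models. -/
def Entails (φ ψ : IPForm) : Prop :=
  ∀ (M : KModel), Finite M.W → ∀ w : M.W, M.Forces w φ → M.Forces w ψ

/-- A q̄-bisimulation between two Kripke models. -/
def IsBisim (q : Set ℕ) (M M' : KModel) (Z : M.W → M'.W → Prop) : Prop :=
  ∀ w w', Z w w' →
    (∀ p ∈ q, (M.val p w ↔ M'.val p w')) ∧
    (∀ v, M.rel w v → ∃ v', M'.rel w' v' ∧ Z v v') ∧
    (∀ v', M'.rel w' v' → ∃ v, M.rel w v ∧ Z v v')

/-- Two pointed models are q̄-bisimilar if some q̄-bisimulation relates them. -/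
def Bisimilar (q : Set ℕ) (M : KModel) (w : M.W) (M' : KModel) (w' : M'.W) : Prop :=
  ∃ Z, IsBisim q M M' Z ∧ Z w w'

/-- A finite pointed Kripke model. -/
structure PKModel where
  M : KModel
  fin : Finite M.W
  w : M.W

/-- The class of finite pointed models forcing a formula φ. -/
def semC (φ : IPForm) : Set PKModel := {X | X.M.Forces X.w φ}

/-- The existential bisimulation quantifier: the class of finite pointed models
q̄-bisimilar to some member of K. -/
def Ep (q : Finset ℕ) (K : Set PKModel) : Set PKModel :=
  {X | ∃ Y ∈ K, Bisimilar ↑q X.M X.w Y.M Y.w}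

/-- The universal bisimulation quantifier: the class of finite pointed models
all of whose q̄-bisimilar companions are in K. -/
def Ap (q : Finset ℕ) (K : Set PKModel) : Set PKModel :=
  {X | ∀ Y : PKModel, Bisimilar ↑q X.M X.w Y.M Y.w → Y ∈ K}

theorem KModel.Forces.persist {M : KModel} {u v : M.W} (h : M.rel u v) {χ : IPForm}
    (hu : M.Forces u χ) : M.Forces v χ := by
  induction χ with
  | var r => exact M.mono h hu
  | bot => exact hu
  | conj a b iha ihb => exact ⟨iha hu.1, ihb hu.2⟩
  | disj a b iha ihb => exact hu.imp iha ihb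
  | impl a b _ _ => exact fun x hx => hu x (M.trans h hx)

theorem IsBisim.forces_iff {q : Set ℕ} {M M' : KModel} {Z : M.W → M'.W → Prop}
    (hZ : IsBisim q M M' Z) {χ : IPForm} (hχ : (χ.vars : Set ℕ) ⊆ q) :
    ∀ {w w'}, Z w w' → (M.Forces w χ ↔ M'.Forces w' χ) := by
  induction χ with
  | var r =>
    intro w w' h
    exact (hZ w w' h).1 r (hχ (by simp [IPForm.vars]))
  | bot => exact fun _ => Iff.rfl
  | conj a b iha ihb =>
    intro w w' h
    simp only [IPForm.vars, Finset.coe_union, Set.union_subset_iff] at hχ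
    exact and_congr (iha hχ.1 h) (ihb hχ.2 h)
  | disj a b iha ihb =>
    intro w w' h
    simp only [IPForm.vars, Finset.coe_union, Set.union_subset_iff] at hχ
    exact or_congr (iha hχ.1 h) (ihb hχ.2 h)
  | impl a b iha ihb =>
    intro w w' h
    simp only [IPForm.vars, Finset.coe_union, Set.union_subset_iff] at hχ
    constructor
    · intro H v' hv' ha
      obtain ⟨v, hv, hz⟩ := (hZ w w' h).2.2 v' hv'
      exact (ihb hχ.2 hz).1 (H v hv ((iha hχ.1 hz).2 ha))
    · intro H v hv ha
      obtain ⟨v', hv', hz⟩ := (hZ w w' h).2.1 v hv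
      exact (ihb hχ.2 hz).2 (H v' hv' ((iha hχ.1 hz).1 ha))

theorem exists_bigConj {q : Finset ℕ} {S : Set IPForm} (hS : S.Finite)
    (hq : ∀ χ ∈ S, χ.vars ⊆ q) :
    ∃ ψ : IPForm, ψ.vars ⊆ q ∧
      ∀ (M : KModel) (w : M.W), M.Forces w ψ ↔ ∀ χ ∈ S, M.Forces w χ := by
  induction S, hS using Set.Finite.induction_on with
  | empty =>
    exact ⟨.impl .bot .bot, by simp [IPForm.vars], fun M w => by simp [KModel.Forces]⟩
  | @insert a S _ _ ih =>
    obtain ⟨ψ, h1, h2⟩ := ih fun χ h => hq χ (Set.mem_insert_of_mem _ h)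
    refine ⟨.conj a ψ, Finset.union_subset (hq a (Set.mem_insert _ _)) h1, fun M w => ?_⟩
    simp [KModel.Forces, h2]

theorem exists_bigDisj {q : Finset ℕ} {S : Set IPForm} (hS : S.Finite)
    (hq : ∀ χ ∈ S, χ.vars ⊆ q) :
    ∃ ψ : IPForm, ψ.vars ⊆ q ∧
      ∀ (M : KModel) (w : M.W), M.Forces w ψ ↔ ∃ χ ∈ S, M.Forces w χ := by
  induction S, hS using Set.Finite.induction_on with
  | empty =>
    exact ⟨.bot, by simp [IPForm.vars], fun M w => by simp [KModel.Forces]⟩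
  | @insert a S _ _ ih =>
    obtain ⟨ψ, h1, h2⟩ := ih fun χ h => hq χ (Set.mem_insert_of_mem _ h)
    refine ⟨.disj a ψ, Finset.union_subset (hq a (Set.mem_insert _ _)) h1, fun M w => ?_⟩
    simp [KModel.Forces, h2]

/-- In a finite model, inclusion of `q`-theories is decided by finitely many formulas: one
separating formula for each pair of points whose theories are not included. -/
theorem exists_separating (q : Finset ℕ) (X : KModel) (hX : Finite X.W) :
    ∃ F : Set IPForm, F.Finite ∧ (∀ χ ∈ F, χ.vars ⊆ q) ∧ (∀ r ∈ q, IPForm.var r ∈ F) ∧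
      ∀ u u' : X.W, (∀ χ ∈ F, X.Forces u χ → X.Forces u' χ) →
        ∀ χ : IPForm, χ.vars ⊆ q → X.Forces u χ → X.Forces u' χ := by
  have key : ∀ a : X.W × X.W, ∃ χ : IPForm, χ.vars ⊆ q ∧
      ((X.Forces a.1 χ → X.Forces a.2 χ) →
        ∀ θ : IPForm, θ.vars ⊆ q → X.Forces a.1 θ → X.Forces a.2 θ) := by
    intro a
    by_cases h : ∀ θ : IPForm, θ.vars ⊆ q → X.Forces a.1 θ → X.Forces a.2 θ
    · exact ⟨.bot, by simp [IPForm.vars], fun _ => h⟩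
    · push Not at h
      obtain ⟨χ, hχ, h1, h2⟩ := h
      exact ⟨χ, hχ, fun h3 => absurd (h3 h1) h2⟩
  choose f hf hf' using key
  refine ⟨Set.range f ∪ IPForm.var '' (q : Set ℕ),
    (Set.finite_range f).union (q.finite_toSet.image _), ?_, ?_, ?_⟩
  · rintro χ (⟨a, rfl⟩ | ⟨r, hr, rfl⟩)
    · exact hf a
    · simpa [IPForm.vars] using hr
  · exact fun r hr => Or.inr ⟨r, hr, rfl⟩
  · exact fun u x h => hf' (u, x) (h _ (Or.inl ⟨(u, x), rfl⟩))

/-- Characteristic formulas of points of finite models. -/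
theorem exists_char (q : Finset ℕ) (X : KModel) (hX : Finite X.W) (w : X.W) :
    ∃ ψ : IPForm, ψ.vars ⊆ q ∧ X.Forces w ψ ∧
      ∀ (N : KModel) (v : N.W), N.Forces v ψ →
        ∃ u, X.rel w u ∧ Bisimilar ↑q X u N v := by
  obtain ⟨F, hFfin, hFq, hFvar, hFsep⟩ := exists_separating q X hX
  have hA : ∀ T : Set IPForm, ∃ ψ : IPForm, ψ.vars ⊆ q ∧
      ∀ (M : KModel) (w : M.W), M.Forces w ψ ↔ ∀ χ ∈ F ∩ T, M.Forces w χ := fun T =>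
    exists_bigConj (hFfin.inter_of_left T) fun χ h => hFq χ h.1
  have hB : ∀ T : Set IPForm, ∃ ψ : IPForm, ψ.vars ⊆ q ∧
      ∀ (M : KModel) (w : M.W), M.Forces w ψ ↔ ∃ χ ∈ F \ T, M.Forces w χ := fun T =>
    exists_bigDisj hFfin.sdiff fun χ h => hFq χ h.1
  choose A hAq hA using hA
  choose B hBq hB using hB
  let Th : X.W → Set IPForm := fun u => {χ | X.Forces u χ}
  have hABq : ∀ T, (IPForm.impl (A T) (B T)).vars ⊆ q := fun T =>
    Finset.union_subset (hAq T) (hBq T)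
  have hAX : ∀ u x : X.W, X.Forces x (A (Th u)) →
      ∀ χ : IPForm, χ.vars ⊆ q → X.Forces u χ → X.Forces x χ := fun u x h =>
    hFsep u x fun χ hχ hu => (hA _ _ _).1 h χ ⟨hχ, hu⟩
  have hBX : ∀ u x : X.W, ¬ X.Forces x (B (Th u)) →
      ∀ χ : IPForm, χ.vars ⊆ q → X.Forces x χ → X.Forces u χ := fun u x h =>
    hFsep x u fun χ hχ hx => by
      by_contra hu
      exact h ((hB _ _ _).2 ⟨χ, ⟨hχ, hu⟩, hx⟩)
  have hnAB : ∀ u : X.W, ¬ X.Forces u (.impl (A (Th u)) (B (Th u))) := by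
    intro u h
    obtain ⟨χ, hχ, hu⟩ := (hB _ _ _).1
      (h u (X.refl u) ((hA _ _ _).2 fun χ hχ => hχ.2))
    exact hχ.2 hu
  -- Inclusion of theories lifts to points above with equal theories.
  have lift : ∀ u x : X.W, (∀ χ : IPForm, χ.vars ⊆ q → X.Forces u χ → X.Forces x χ) →
      ∃ u', X.rel u u' ∧ ∀ χ : IPForm, χ.vars ⊆ q → (X.Forces u' χ ↔ X.Forces x χ) := by
    intro u x hux
    by_contra hno
    refine hnAB x (hux _ (hABq _) fun y hy hyA => ?_)
    by_contra hyB
    exact hno ⟨y, hy, fun χ hχ => ⟨hBX x y hyB χ hχ, hAX x y hyA χ hχ⟩⟩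
  let S1 : Set IPForm := (fun T => IPForm.impl (A T) (B T)) ''
    {T | T ⊆ F ∧ ∀ u : X.W, F ∩ Th u ≠ T}
  let S2 : Set IPForm :=
    (fun a : X.W × X.W =>
      IPForm.impl (.impl (A (Th a.2)) (B (Th a.2))) (B (Th a.1))) '' {a | X.rel a.1 a.2}
  have hSfin : (S1 ∪ S2 ∪ {A (Th w)}).Finite := by
    refine Set.Finite.union (Set.Finite.union ?_ ?_) (Set.finite_singleton _)
    · exact (hFfin.finite_subsets.subset fun T h => h.1).image _
    · exact (Set.toFinite _).image _
  obtain ⟨ψ, hψq, hψ⟩ := exists_bigConj (q := q) hSfin (by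
    rintro χ ((⟨T, _, rfl⟩ | ⟨a, _, rfl⟩) | rfl)
    · exact hABq T
    · exact Finset.union_subset (hABq _) (hBq _)
    · exact hAq _)
  refine ⟨ψ, hψq, ?_, ?_⟩
  · rw [hψ]
    rintro χ ((⟨T, ⟨hTF, hT⟩, rfl⟩ | ⟨a, ha, rfl⟩) | rfl)
    · intro x _ hxA
      by_contra hxB
      refine hT x (Set.Subset.antisymm ?_ ?_)
      · rintro χ ⟨hχF, hχ⟩
        by_contra hχT
        exact hxB ((hB _ _ _).2 ⟨χ, ⟨hχF, hχT⟩, hχ⟩)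
      · exact fun χ hχ => ⟨hTF hχ, (hA _ _ _).1 hxA χ ⟨hTF hχ, hχ⟩⟩
    · intro x _ hx
      by_contra hxB
      exact hnAB a.2 (KModel.Forces.persist ha (hBX a.1 x hxB _ (hABq _) hx))
    · exact (hA _ _ _).2 fun χ hχ => hχ.2
  · intro N v hv
    -- Every point above `v` has the type of a point of `X`.
    have real : ∀ n, N.rel v n → ∃ u : X.W, ∀ χ ∈ F, (X.Forces u χ ↔ N.Forces n χ) := by
      intro n hn
      by_contra hno
      have hmem : IPForm.impl (A (F ∩ {χ | N.Forces n χ})) (B (F ∩ {χ | N.Forces n χ})) ∈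
          S1 ∪ S2 ∪ {A (Th w)} := by
        refine Or.inl (Or.inl ⟨_, ⟨Set.inter_subset_left, fun u hu => hno ⟨u, ?_⟩⟩, rfl⟩)
        intro χ hχ
        have := Set.ext_iff.1 hu χ
        simpa [hχ, Th] using this
      obtain ⟨χ, hχ, h⟩ := (hB _ _ _).1
        ((hψ _ _).1 hv _ hmem n hn ((hA _ _ _).2 fun χ hχ => hχ.2.2))
      exact hχ.2 ⟨hχ.1, h⟩
    have lift' : ∀ (u : X.W) (n : N.W), N.rel v n →
        (∀ χ ∈ F, X.Forces u χ → N.Forces n χ) →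
        ∃ u', X.rel u u' ∧ ∀ χ ∈ F, (X.Forces u' χ ↔ N.Forces n χ) := by
      intro u n hn h
      obtain ⟨x, hx⟩ := real n hn
      obtain ⟨u', hu', he⟩ := lift u x (hFsep u x fun χ hχ hu => (hx χ hχ).2 (h χ hχ hu))
      exact ⟨u', hu', fun χ hχ => (he χ (hFq χ hχ)).trans (hx χ hχ)⟩
    obtain ⟨u, hwu, hu⟩ := lift' w v (N.refl v) fun χ hχ hw =>
      (hA _ _ _).1 ((hψ _ _).1 hv _ (Or.inr rfl)) χ ⟨hχ, hw⟩
    refine ⟨u, hwu, fun x n => N.rel v n ∧ ∀ χ ∈ F, (X.Forces x χ ↔ N.Forces n χ), ?_,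
      N.refl v, hu⟩
    rintro x n ⟨hn, hxn⟩
    refine ⟨fun r hr => hxn _ (hFvar r hr), fun x' hx' => ?_, fun n' hn' => ?_⟩
    · have hnB : ¬ N.Forces n (B (Th x)) := by
        intro h
        obtain ⟨χ, hχ, h⟩ := (hB _ _ _).1 h
        exact hχ.2 ((hxn χ hχ.1).2 h)
      have himp : ¬ N.Forces n (.impl (A (Th x')) (B (Th x'))) := fun h =>
        hnB ((hψ _ _).1 hv _ (Or.inl (Or.inr ⟨(x, x'), hx', rfl⟩)) n hn h)
      simp only [KModel.Forces, not_forall] at himp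
      obtain ⟨n', hn', hA', hB'⟩ := himp
      refine ⟨n', hn', N.trans hn hn', fun χ hχ => ⟨fun h => (hA _ _ _).1 hA' χ ⟨hχ, h⟩,
        fun h => ?_⟩⟩
      by_contra hx
      exact hB' ((hB _ _ _).2 ⟨χ, ⟨hχ, hx⟩, h⟩)
    · obtain ⟨x', hx', h⟩ := lift' x n' (N.trans hn hn') fun χ hχ hx =>
        KModel.Forces.persist hn' ((hxn χ hχ).1 hx)
      exact ⟨x', hx', N.trans hn hn', h⟩

/-- The model `N` glued on top of `X` along a `q`-bisimulation `Z`: a point `x` of `X` lies below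
`n` when some `x'` above `x` is related to `n`. Variables outside `q` are false on the `X` part,
since persistence into `N` may fail for the valuation they have in `X`. -/
def glue (q : Set ℕ) (X N : KModel) (Z : X.W → N.W → Prop) (hZ : IsBisim q X N Z) : KModel where
  W := X.W ⊕ N.W
  rel
    | .inl x, .inl x' => X.rel x x'
    | .inl x, .inr n => ∃ x', X.rel x x' ∧ Z x' n
    | .inr _, .inl _ => False
    | .inr n, .inr n' => N.rel n n'
  refl
    | .inl x => X.refl x
    | .inr n => N.refl n
  trans := by
    rintro (x | n) (y | m) (z | k) h1 h2
    · exact X.trans h1 h2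
    · obtain ⟨y', hy, hz⟩ := h2
      exact ⟨y', X.trans h1 hy, hz⟩
    · exact h2.elim
    · obtain ⟨x', hx, hz⟩ := h1
      obtain ⟨x'', hx', hz'⟩ := (hZ _ _ hz).2.2 k h2
      exact ⟨x'', X.trans hx hx', hz'⟩
    · exact h1.elim
    · exact h1.elim
    · exact h2.elim
    · exact N.trans h1 h2
  val r
    | .inl x => r ∈ q ∧ X.val r x
    | .inr n => N.val r n
  mono := by
    rintro r (x | n) (y | m) h hv
    · exact ⟨hv.1, X.mono h hv.2⟩
    · obtain ⟨x', hx, hz⟩ := h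
      exact ((hZ _ _ hz).1 r hv.1).1 (X.mono hx hv.2)
    · exact h.elim
    · exact N.mono h hv

theorem glue_bisimilar {q : Set ℕ} {X N : KModel} {Z : X.W → N.W → Prop}
    (hZ : IsBisim q X N Z) (w : X.W) : Bisimilar q X w (glue q X N Z hZ) (.inl w) := by
  refine ⟨fun x y => Sum.elim (fun x' => x = x') (fun n => Z x n) y, ?_, rfl⟩
  rintro x (x' | n) h
  · obtain rfl : x = x' := h
    refine ⟨fun r hr => ⟨fun h => ⟨hr, h⟩, fun h => h.2⟩, fun v hv => ⟨.inl v, hv, rfl⟩, ?_⟩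
    rintro (v | n) hv
    · exact ⟨v, hv, rfl⟩
    · exact hv
  · obtain ⟨h1, h2, h3⟩ := hZ x n h
    refine ⟨h1, fun v hv => ?_, ?_⟩
    · obtain ⟨n', hn', hz⟩ := h2 v hv
      exact ⟨.inr n', hn', hz⟩
    · rintro (v | n') hv
      · exact hv.elim
      · exact h3 n' hv

theorem glue_forces_inr {q : Set ℕ} {X N : KModel} {Z : X.W → N.W → Prop}
    (hZ : IsBisim q X N Z) (n : N.W) (χ : IPForm) :
    (glue q X N Z hZ).Forces (.inr n) χ ↔ N.Forces n χ := by
  have hb : IsBisim Set.univ (glue q X N Z hZ) N (fun y n => y = .inr n) := by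
    rintro _ m rfl
    refine ⟨fun r _ => Iff.rfl, ?_, fun m' hm' => ⟨.inr m', hm', rfl⟩⟩
    rintro (x | m') h
    · exact h.elim
    · exact ⟨m', h, rfl⟩
  exact hb.forces_iff (Set.subset_univ _) rfl

/-- **Left uniform interpolants define the universal bisimulation
quantifier.** -/
theorem leftUI_defines_Ap (p : ℕ) (qbar : Finset ℕ) (hp : p ∉ qbar)
    (φ α : IPForm) (hφ : φ.vars ⊆ insert p qbar) (hα : α.vars ⊆ qbar)
    (h1 : Entails α φ)
    (h2 : ∀ ψ : IPForm, p ∉ ψ.vars → Entails ψ φ → Entails ψ α) :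
    semC α = Ap qbar (semC φ) := by
  ext ⟨X, hX, w⟩
  constructor
  · rintro hα' ⟨Y, hY, y⟩ ⟨Z, hZ, hwy⟩
    exact h1 Y hY y ((hZ.forces_iff (Finset.coe_subset.2 hα) hwy).1 hα')
  · intro hAp
    obtain ⟨ψ, hψq, hw, hchar⟩ := exists_char qbar X hX w
    refine h2 ψ (fun h => hp (hψq h)) ?_ X hX w hw
    intro N hN v hv
    obtain ⟨u, hwu, Z, hZ, huv⟩ := hchar N v hv
    have hfin : Finite (glue qbar X N Z hZ).W := inferInstanceAs (Finite (X.W ⊕ N.W))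
    have hroot : (glue qbar X N Z hZ).Forces (.inl w) φ :=
      hAp ⟨glue qbar X N Z hZ, hfin, .inl w⟩ (glue_bisimilar hZ w)
    have hrel : (glue qbar X N Z hZ).rel (.inl w) (.inr v) := ⟨u, hwu, huv⟩
    exact (glue_forces_inr hZ v φ).1 (KModel.Forces.persist hrel hroot)
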